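/- For every even integer n > 6, the number of partitions of n into distinct parts with more odd parts than even parts is strictly greater than the number of partitions of n into distinct parts with more even parts than odd parts; that is, d_o(n) > d_e(n) for all even n > 6. -/

import Mathlib

/-- The number of odd parts of a partition, counted with multiplicity. -/
def Nat.Partition.oddCount {n : ℕ} (l : n.Partition) : ℕ :=
  (l.parts.filter (fun p => p % 2 = 1)).card

/-- The number of even parts of a partition, counted with multiplicity. -/
def Nat.Partition.evenCount {n : ℕ} (l : n.Partition) : ℕ :=
  (l.parts.filter (fun p => p % 2 = 0)).card

open Finset

namespace DP
open PowerSeries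

/-- power series with nonnegative coefficients -/
def NN (f : PowerSeries ℤ) : Prop := ∀ n, 0 ≤ coeff n f

lemma NN.add {f h : PowerSeries ℤ} (hf : NN f) (hh : NN h) : NN (f + h) := by
  intro n; rw [map_add]; exact add_nonneg (hf n) (hh n)

lemma NN.mul {f h : PowerSeries ℤ} (hf : NN f) (hh : NN h) : NN (f * h) := by
  intro n; rw [coeff_mul]; exact Finset.sum_nonneg fun p _ => mul_nonneg (hf _) (hh _)

lemma NN.zero : NN 0 := by intro n; simp

lemma NN.one : NN 1 := by
  intro n; rw [coeff_one]; split_ifs <;> norm_num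

lemma NN.Xpow (k : ℕ) : NN (X ^ k) := by
  intro n; rw [coeff_X_pow]; split_ifs <;> norm_num

lemma NN.X1 : NN X := by simpa using NN.Xpow 1

lemma NN.pow {f : PowerSeries ℤ} (hf : NN f) (k : ℕ) : NN (f ^ k) := by
  induction k with
  | zero => simpa using NN.one
  | succ k ih => rw [pow_succ]; exact ih.mul hf

lemma NN.nat (k : ℕ) : NN (k : PowerSeries ℤ) := by
  induction k with
  | zero => simpa using NN.zero
  | succ k ih => push_cast; exact ih.add NN.one

lemma NN.sum {ι : Type*} (s : Finset ι) (f : ι → PowerSeries ℤ) (h : ∀ i ∈ s, NN (f i)) :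
    NN (∑ i ∈ s, f i) := by
  intro n; rw [map_sum]; exact Finset.sum_nonneg fun i hi => h i hi n

lemma NN.prod {ι : Type*} (s : Finset ι) (f : ι → PowerSeries ℤ) (h : ∀ i ∈ s, NN (f i)) :
    NN (∏ i ∈ s, f i) := by
  classical
  induction s using Finset.induction_on with
  | empty => simpa using NN.one
  | insert a s ha ih =>
    rw [Finset.prod_insert ha]
    exact (h a (by simp)).mul (ih fun i hi => h i (by simp [hi]))

lemma NN.of_nat_mul {f : PowerSeries ℤ} {k : ℕ} (hk : 0 < k) (h : NN ((k : PowerSeries ℤ) * f)) :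
    NN f := by
  intro n
  have := h n
  have h2 : coeff n ((k : PowerSeries ℤ) * f) = (k : ℤ) * coeff n f := by
    rw [← nsmul_eq_mul, map_nsmul, nsmul_eq_mul]
  rw [h2] at this
  have hk' : (0 : ℤ) < k := by exact_mod_cast hk
  exact nonneg_of_mul_nonneg_right this hk'

/-- the geometric series `1/(1 - X^k)` -/
noncomputable def g (k : ℕ) : PowerSeries ℤ := PowerSeries.mk fun n => if k ∣ n then 1 else 0

lemma NN.g (k : ℕ) : NN (g k) := by
  intro n; simp only [DP.g, coeff_mk]; split_ifs <;> norm_num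

lemma g_mul (k : ℕ) (hk : 0 < k) : (1 - X ^ k) * g k = 1 := by
  ext n
  rw [sub_mul, one_mul, map_sub, coeff_X_pow_mul', coeff_one]
  simp only [g, coeff_mk]
  by_cases h : k ≤ n
  · rw [if_pos h, if_neg (by omega : n ≠ 0)]
    have : k ∣ n - k ↔ k ∣ n := by
      constructor
      · intro h1; have := Nat.dvd_add h1 (dvd_refl k); rwa [Nat.sub_add_cancel h] at this
      · intro h1; exact Nat.dvd_sub h1 (dvd_refl k)
    simp [this]
  · rw [if_neg h]
    rcases Nat.eq_zero_or_pos n with rfl | hn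
    · simp
    · rw [if_neg (Nat.not_dvd_of_pos_of_lt hn (by omega)), if_neg (by omega)]; simp

/-- `1/((1-X)...(1-X^n))` -/
noncomputable def iQ (n : ℕ) : PowerSeries ℤ := ∏ i ∈ Finset.Icc 1 n, g i

lemma iQ_zero : iQ 0 = 1 := by simp [iQ]

lemma iQ_succ (n : ℕ) : iQ (n + 1) = iQ n * g (n + 1) := by
  unfold iQ
  rw [Finset.prod_Icc_succ_top (by omega)]

lemma NN.iQ (n : ℕ) : NN (iQ n) := NN.prod _ _ fun i _ => NN.g i

lemma iQ_succ' (n : ℕ) : iQ n = (1 - X ^ (n + 1)) * iQ (n + 1) := by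
  rw [iQ_succ]
  linear_combination (- iQ n) * g_mul (n + 1) (by omega)

/-- cancel a set of distinct factors -/
lemma iQ_split (n : ℕ) (S : Finset ℕ) (hS : S ⊆ Finset.Icc 1 n) :
    iQ n = (∏ i ∈ S, g i) * ∏ i ∈ Finset.Icc 1 n \ S, g i := by
  unfold iQ
  rw [mul_comm, Finset.prod_sdiff hS]

lemma NN_cancel1 (n a : ℕ) (ha : 0 < a) (han : a ≤ n) : NN ((1 - X ^ a) * iQ n) := by
  rw [iQ_split n {a} (by intro x; simp; omega), Finset.prod_singleton, ← mul_assoc, g_mul a ha,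
    one_mul]
  exact NN.prod _ _ fun i _ => NN.g i

lemma NN_cancel2 (n a b : ℕ) (ha : 0 < a) (han : a ≤ n) (hb : 0 < b) (hbn : b ≤ n) (hab : a ≠ b) :
    NN ((1 - X ^ a) * (1 - X ^ b) * iQ n) := by
  rw [iQ_split n {a, b} (by intro x; simp; omega), Finset.prod_pair hab]
  have : NN (∏ i ∈ Finset.Icc 1 n \ {a, b}, g i) := NN.prod _ _ fun i _ => NN.g i
  convert this using 1
  linear_combination ((1 - X ^ b) * g b * ∏ i ∈ Finset.Icc 1 n \ {a, b}, g i) * g_mul a ha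
    + (∏ i ∈ Finset.Icc 1 n \ {a, b}, g i) * g_mul b hb

lemma NN_cancel3 (n a b d : ℕ) (ha : 0 < a) (han : a ≤ n) (hb : 0 < b) (hbn : b ≤ n)
    (hd : 0 < d) (hdn : d ≤ n) (hab : a ≠ b) (had : a ≠ d) (hbd : b ≠ d) :
    NN ((1 - X ^ a) * (1 - X ^ b) * (1 - X ^ d) * iQ n) := by
  rw [iQ_split n {a, b, d} (by intro x; simp; omega),
    Finset.prod_insert (by simp [hab, had]), Finset.prod_pair hbd]
  have : NN (∏ i ∈ Finset.Icc 1 n \ {a, b, d}, g i) := NN.prod _ _ fun i _ => NN.g i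
  convert this using 1
  linear_combination ((1 - X ^ b) * g b * (1 - X ^ d) * g d
      * ∏ i ∈ Finset.Icc 1 n \ {a, b, d}, g i) * g_mul a ha
    + ((1 - X ^ d) * g d * ∏ i ∈ Finset.Icc 1 n \ {a, b, d}, g i) * g_mul b hb
    + (∏ i ∈ Finset.Icc 1 n \ {a, b, d}, g i) * g_mul d hd

/-- `(1-X^(a*k)) / (1-X^a)` as a polynomial -/
lemma geom_fac (a k : ℕ) : ∃ p : PowerSeries ℤ, NN p ∧ (1 - X ^ (a * k)) = (1 - X ^ a) * p := by
  refine ⟨∑ i ∈ Finset.range k, (X ^ a) ^ i, NN.sum _ _ fun i _ => (NN.Xpow a).pow i, ?_⟩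
  rw [pow_mul, mul_neg_geom_sum]

/-- `e(2j,b)`: generating function for `2j` odd and `b` even distinct parts -/
noncomputable def ee (j b : ℕ) : PowerSeries ℤ :=
  X ^ (2 * j ^ 2 + b * (b + 1) / 2) * (iQ (2 * j) * iQ b)

/-- `T(2i,2j)`, for `i < j` -/
noncomputable def TT (i j : ℕ) : PowerSeries ℤ :=
  X ^ (2 * i ^ 2 + 2 * j ^ 2 - j) * (1 - X ^ (j - i)) * (iQ (2 * i) * iQ (2 * j))

/-- `O_{2j}` -/
noncomputable def OO (j : ℕ) : PowerSeries ℤ :=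
  X ^ (4 * j ^ 2 - j) * (iQ (2 * j - 1) * iQ (2 * j))

lemma ee_pair (i j : ℕ) (hj : 0 < j) :
    ee i (2 * j) + ee i (2 * j - 1) = X ^ (2 * i ^ 2 + 2 * j ^ 2 - j) * (iQ (2 * i) * iQ (2 * j)) := by
  obtain ⟨k, rfl⟩ : ∃ k, j = k + 1 := ⟨j - 1, by omega⟩
  unfold ee
  have e1 : 2 * (k + 1) * (2 * (k + 1) + 1) / 2 = (k + 1) * (2 * (k + 1) + 1) := by
    rw [mul_assoc]; exact Nat.mul_div_cancel_left _ (by norm_num)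
  have e2 : (2 * (k + 1) - 1) * (2 * (k + 1) - 1 + 1) / 2 = (2 * k + 1) * (k + 1) := by
    have : (2 * (k + 1) - 1) * (2 * (k + 1) - 1 + 1) = 2 * ((2 * k + 1) * (k + 1)) := by
      have : 2 * (k + 1) - 1 = 2 * k + 1 := by omega
      rw [this]; ring
    rw [this]; exact Nat.mul_div_cancel_left _ (by norm_num)
  have e3 : 2 * i ^ 2 + 2 * (k + 1) ^ 2 - (k + 1) = 2 * i ^ 2 + (2 * k + 1) * (k + 1) := by
    have : 2 * (k + 1) ^ 2 = (2 * k + 1) * (k + 1) + (k + 1) := by ring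
    omega
  have e4 : 2 * i ^ 2 + (k + 1) * (2 * (k + 1) + 1)
      = (2 * i ^ 2 + (2 * k + 1) * (k + 1)) + (2 * k + 1 + 1) := by ring
  have e5 : 2 * (k + 1) - 1 = 2 * k + 1 := by omega
  rw [e1, e2, e3, e4, e5, iQ_succ' (2 * k + 1)]
  have e6 : 2 * (k + 1) = 2 * k + 1 + 1 := by omega
  rw [e6]
  ring

lemma ee_zero (i : ℕ) : ee i 0 = X ^ (2 * i ^ 2) * (iQ (2 * i)) := by
  simp [ee, iQ_zero]

/-- off-diagonal blocks -/
lemma ee_block (i j : ℕ) (hij : i < j) :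
    ee i (2 * j) + ee i (2 * j - 1) - (ee j (2 * i) + if i = 0 then 0 else ee j (2 * i - 1))
      = TT i j := by
  rw [ee_pair i j (by omega)]
  have hle : j ≤ 2 * j ^ 2 := by nlinarith
  have e : 2 * j ^ 2 + 2 * i ^ 2 - i = (2 * i ^ 2 + 2 * j ^ 2 - j) + (j - i) := by omega
  have h2 : (ee j (2 * i) + if i = 0 then 0 else ee j (2 * i - 1))
      = X ^ (2 * j ^ 2 + 2 * i ^ 2 - i) * (iQ (2 * j) * iQ (2 * i)) := by
    split_ifs with h
    · subst h; simp [ee_zero, iQ_zero]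
    · exact ee_pair j i (by omega)
  rw [h2, e, TT]
  ring

lemma sum_range_odd {M : Type*} [AddCommMonoid M] (f : ℕ → M) (J : ℕ) :
    ∑ b ∈ range (2 * J + 1), f b
      = ∑ i ∈ range (J + 1), (f (2 * i) + if i = 0 then 0 else f (2 * i - 1)) := by
  induction J with
  | zero => simp
  | succ J ih =>
    rw [Finset.sum_range_succ _ (J + 1), ← ih]
    have : 2 * (J + 1) + 1 = 2 * J + 1 + 1 + 1 := by ring
    rw [this, Finset.sum_range_succ, Finset.sum_range_succ, if_neg (by omega)]
    have h1 : 2 * (J + 1) = 2 * J + 1 + 1 := by ring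
    have h2 : 2 * (J + 1) - 1 = 2 * J + 1 := by omega
    rw [h2, h1]
    abel

/-- the signed sum over the box -/
theorem box_identity (J : ℕ) :
    ∑ j ∈ range (J + 1), ∑ b ∈ range (2 * J + 1),
        ((if b < 2 * j then (1 : PowerSeries ℤ) else 0) - (if 2 * j < b then 1 else 0)) * ee j b
      = ∑ j ∈ range J, OO (j + 1)
        - ∑ j ∈ range (J + 1), ∑ i ∈ range j, TT i j := by
  induction J with
  | zero => simp
  | succ J ih =>
    rw [Finset.sum_range_succ _ (J + 1)]
    have h1 : 2 * (J + 1) + 1 = 2 * J + 1 + 1 + 1 := by ring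
    have h2 : ∑ j ∈ range (J + 1), ∑ b ∈ range (2 * (J + 1) + 1),
        ((if b < 2 * j then (1 : PowerSeries ℤ) else 0) - (if 2 * j < b then 1 else 0)) * ee j b
        = ∑ j ∈ range (J + 1), ∑ b ∈ range (2 * J + 1),
        ((if b < 2 * j then (1 : PowerSeries ℤ) else 0) - (if 2 * j < b then 1 else 0)) * ee j b
        - ∑ j ∈ range (J + 1), (ee j (2 * (J + 1)) + ee j (2 * (J + 1) - 1)) := by
      rw [← Finset.sum_sub_distrib]
      apply Finset.sum_congr rfl
      intro j hj
      rw [Finset.mem_range] at hj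
      rw [h1, Finset.sum_range_succ, Finset.sum_range_succ,
        if_neg (by omega : ¬ 2 * J + 1 < 2 * j), if_pos (by omega : 2 * j < 2 * J + 1),
        if_neg (by omega : ¬ 2 * J + 1 + 1 < 2 * j), if_pos (by omega : 2 * j < 2 * J + 1 + 1)]
      have h3 : 2 * (J + 1) = 2 * J + 1 + 1 := by ring
      have h4 : 2 * (J + 1) - 1 = 2 * J + 1 := by omega
      rw [h4, h3]
      ring
    have h5 : ∑ b ∈ range (2 * (J + 1) + 1),
        ((if b < 2 * (J + 1) then (1 : PowerSeries ℤ) else 0)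
          - (if 2 * (J + 1) < b then 1 else 0)) * ee (J + 1) b
        = ∑ b ∈ range (2 * J + 1), ee (J + 1) b + OO (J + 1) := by
      rw [h1, Finset.sum_range_succ, Finset.sum_range_succ,
        if_pos (by omega : 2 * J + 1 < 2 * (J + 1)), if_neg (by omega : ¬ 2 * (J + 1) < 2 * J + 1),
        if_neg (by omega : ¬ 2 * J + 1 + 1 < 2 * (J + 1)),
        if_neg (by omega : ¬ 2 * (J + 1) < 2 * J + 1 + 1)]
      have : ee (J + 1) (2 * J + 1) = OO (J + 1) := by
        unfold ee OO
        have e1 : (2 * J + 1) * (2 * J + 1 + 1) / 2 = (2 * J + 1) * (J + 1) := by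
          have : (2 * J + 1) * (2 * J + 1 + 1) = 2 * ((2 * J + 1) * (J + 1)) := by ring
          rw [this]; exact Nat.mul_div_cancel_left _ (by norm_num)
        have e2 : 4 * (J + 1) ^ 2 - (J + 1) = 2 * (J + 1) ^ 2 + (2 * J + 1) * (J + 1) := by
          have : 4 * (J + 1) ^ 2 = 2 * (J + 1) ^ 2 + (2 * J + 1) * (J + 1) + (J + 1) := by ring
          omega
        have e3 : 2 * (J + 1) - 1 = 2 * J + 1 := by omega
        rw [e1, e2, e3]; ring
      rw [this]
      have : ∑ b ∈ range (2 * J + 1),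
        ((if b < 2 * (J + 1) then (1 : PowerSeries ℤ) else 0)
          - (if 2 * (J + 1) < b then 1 else 0)) * ee (J + 1) b
          = ∑ b ∈ range (2 * J + 1), ee (J + 1) b := by
        apply Finset.sum_congr rfl
        intro b hb
        rw [Finset.mem_range] at hb
        rw [if_pos (by omega), if_neg (by omega)]
        ring
      rw [this]
      ring
    rw [h2, ih, h5, sum_range_odd, Finset.sum_range_succ (fun j => OO (j + 1)) J,
      Finset.sum_range_succ (fun j => ∑ i ∈ range j, TT i j) (J + 1)]
    have h6 : ∑ i ∈ range (J + 1), TT i (J + 1)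
        = ∑ i ∈ range (J + 1), (ee i (2 * (J + 1)) + ee i (2 * (J + 1) - 1))
          - ∑ i ∈ range (J + 1), (ee (J + 1) (2 * i)
            + if i = 0 then 0 else ee (J + 1) (2 * i - 1)) := by
      rw [← Finset.sum_sub_distrib]
      apply Finset.sum_congr rfl
      intro i hi
      rw [Finset.mem_range] at hi
      rw [ee_block i (J + 1) hi]
    rw [h6]
    ring

end DP

namespace DP
open PowerSeries

noncomputable def UU (i j : ℕ) : PowerSeries ℤ :=
  X ^ ((i + j) ^ 2 - (i + j + 3) / 2 + (j - i - 1) ^ 2) * (iQ (2 * i) * iQ (2 * j - 2))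
    * g (i + j - 1)

noncomputable def DD (i r : ℕ) : PowerSeries ℤ :=
  X ^ ((2 * i + r) ^ 2 - (2 * i + r + 3) / 2 + (r - 1) ^ 2) * (1 - X ^ (2 * r))
    * (1 + X ^ (2 * r) - X ^ (2 * i + 2 * r) - X ^ (2 * i + 2 * r - 1))
    * (iQ (2 * i) * iQ (2 * (i + r))) * g (2 * i + r - 1)

lemma UU_zero (r : ℕ) (hr : 0 < r) : UU 0 r = DD 0 r := by
  obtain ⟨k, rfl⟩ : ∃ k, r = k + 1 := ⟨r - 1, by omega⟩
  unfold UU DD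
  have e1 : 2 * (k + 1) - 2 = 2 * k := by omega
  have e2 : 2 * 0 + 2 * (k + 1) - 1 = 2 * k + 1 := by omega
  have e3 : 2 * (0 + (k + 1)) = 2 * k + 1 + 1 := by omega
  rw [e1, e2, e3, iQ_succ' (2 * k), iQ_succ' (2 * k + 1)]
  simp only [Nat.mul_zero, Nat.zero_add, Nat.sub_zero]
  have e4 : 2 * (k + 1) = 2 * k + 1 + 1 := by omega
  rw [e4]
  ring

lemma UU_succ (i r : ℕ) (hr : 0 < r) :
    UU (i + 1) (i + 1 + r) - UU i (i + 1 + r + 1) = DD (i + 1) r := by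
  obtain ⟨k, rfl⟩ : ∃ k, r = k + 1 := ⟨r - 1, by omega⟩
  unfold UU DD
  have e0 : i + 1 + (i + 1 + (k + 1)) = 2 * (i + 1) + (k + 1) := by omega
  have e0' : i + (i + 1 + (k + 1) + 1) = 2 * (i + 1) + (k + 1) := by omega
  have e00 : i + 1 + (k + 1) - (i + 1) - 1 = k := by omega
  have e01 : i + 1 + (k + 1) + 1 - i - 1 = k + 2 := by omega
  rw [e0, e0', e00, e01]
  have e02 : k + 1 - 1 = k := by omega
  rw [e02]
  generalize (2 * (i + 1) + (k + 1)) ^ 2 - (2 * (i + 1) + (k + 1) + 3) / 2 = E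
  generalize g (2 * (i + 1) + (k + 1) - 1) = G
  have e1 : 2 * (i + 1 + (k + 1)) - 2 = 2 * i + 2 * k + 2 := by omega
  have e2 : 2 * (i + 1 + (k + 1) + 1) - 2 = 2 * i + 2 * k + 2 + 1 + 1 := by omega
  have e3 : 2 * (i + 1 + (k + 1)) = 2 * i + 2 * k + 2 + 1 + 1 := by omega
  have e4 : 2 * (i + 1) + 2 * (k + 1) - 1 = 2 * i + 2 * k + 3 := by omega
  have e5 : 2 * (i + 1) = 2 * i + 1 + 1 := by omega
  rw [e1, e2, e3, e4, e5, iQ_succ' (2 * i + 2 * k + 2), iQ_succ' (2 * i + 2 * k + 2 + 1),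
    iQ_succ' (2 * i), iQ_succ' (2 * i + 1)]
  generalize iQ (2 * i + 1 + 1) = A
  generalize iQ (2 * i + 2 * k + 2 + 1 + 1) = B
  ring

/-- a further factor `1 - X` -/
lemma NN_extra (i r : ℕ) (_hr : 0 < r) (hc : 3 ≤ 2 * i + r) (t a b : ℕ) (_ht : 0 < t)
    (ha : 0 < a) (hb : 0 < b)
    (har : a ≤ 2 * (i + r)) (hbr : b ≤ 2 * (i + r)) (hab : a ≠ b)
    (h0 : i = 0 → a ≠ 1 ∧ b ≠ 1) :
    NN ((1 - X ^ t) * (1 - X ^ a) * (1 - X ^ b) * (iQ (2 * i) * iQ (2 * (i + r)))) := by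
  obtain ⟨p, hp, hp2⟩ := geom_fac 1 t
  rw [one_mul] at hp2
  rcases Nat.eq_zero_or_pos i with h | h
  · obtain ⟨h1, h2⟩ := h0 h
    have := (NN_cancel3 (2 * (i + r)) 1 a b one_pos (by omega) ha har hb hbr (Ne.symm h1)
      (Ne.symm h2) hab).mul (hp.mul (NN.iQ (2 * i)))
    rw [hp2]
    convert this using 1
    ring
  · have := ((NN_cancel2 (2 * (i + r)) a b ha har hb hbr hab).mul
      (NN_cancel1 (2 * i) 1 one_pos (by omega))).mul hp
    rw [hp2]
    convert this using 1
    ring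

lemma core (i r E e : ℕ) (hr : 0 < r) (hc : 3 ≤ 2 * i + r) (K : PowerSeries ℤ)
    (hK : X ^ r + X ^ (2 * r) - 2 * X ^ e = K)
    (hNN : NN ((1 - X ^ r) * K * (iQ (2 * i) * iQ (2 * (i + r))))) :
    NN (X ^ E * (1 - X ^ (2 * r))
    * (1 + X ^ (2 * r) - X ^ (2 * i + 2 * r) - X ^ (2 * i + 2 * r - 1))
    * (iQ (2 * i) * iQ (2 * (i + r))) * g (2 * i + r - 1)
    - 4 * (X ^ (E + e) * (1 - X ^ r) * (iQ (2 * i) * iQ (2 * (i + r))))) := by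
  have t1 : NN ((1 - X ^ r) * (1 - X ^ r) * (1 - X ^ (2 * r))
      * (iQ (2 * i) * iQ (2 * (i + r)))) :=
    NN_extra i r hr hc r r (2 * r) hr hr (by omega) (by omega) (by omega) (by omega) (by omega)
  have t2 : NN ((1 - X ^ 1) * (1 - X ^ (2 * r)) * iQ (2 * (i + r))) :=
    NN_cancel2 _ _ _ one_pos (by omega) (by omega) (by omega) (by omega)
  have hg := g_mul (2 * i + r - 1) (by omega)
  have T := ((NN.Xpow E).mul (((t1.mul (NN.g (2 * i + r - 1))).add
    (((t2.mul (NN.iQ (2 * i))).mul (NN.Xpow (r + (2 * i + r - 1)))).mul (NN.g (2 * i + r - 1)))).add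
    ((NN.nat 2).mul hNN)))
  convert T using 1
  rw [← hK]
  obtain ⟨k, hk⟩ : ∃ k, 2 * i + r = k + 1 := ⟨2 * i + r - 1, by omega⟩
  have e1 : 2 * i + r - 1 = k := by omega
  have e2 : 2 * i + 2 * r - 1 = k + r := by omega
  have e3 : 2 * i + 2 * r = k + 1 + r := by omega
  rw [e1] at hg
  rw [e1, e2, e3]
  generalize iQ (2 * i) = A at *
  generalize iQ (2 * (i + r)) = B at *
  generalize g k = G at *
  push_cast
  linear_combination (X ^ E * 2 * (1 - X ^ r) * (X ^ r + X ^ (2 * r) - 2 * X ^ e) * A * B) * hg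
    + 4 * (X ^ E * X ^ e * (1 - X ^ r) * A * B) * hg

lemma NN_sub_iff (f h : PowerSeries ℤ) : NN (f - h) ↔ ∀ n, coeff n h ≤ coeff n f := by
  unfold NN; simp [map_sub]

lemma TT_le_DD (i r : ℕ) (hr : 0 < r) (hc : 3 ≤ 2 * i + r) :
    NN (DD i r - 4 * TT i (i + r)) := by
  unfold DD TT
  have e0 : i + r - i = r := by omega
  rw [e0]
  rcases Nat.even_or_odd' r with ⟨h, hh | hh⟩
  · have key := core i r ((2 * i + r) ^ 2 - (2 * i + r + 3) / 2 + (r - 1) ^ 2) (3 * h) hr hc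
      (X ^ r * (1 - X ^ h) * (1 - X ^ h)) (by subst hh; ring) (by
        have := (NN_extra i r hr hc h h r (by omega) (by omega) hr (by omega) (by omega)
          (by omega) (by omega)).mul (NN.Xpow r)
        convert this using 1
        ring)
    have e1 : 2 * i ^ 2 + 2 * (i + r) ^ 2 - (i + r)
        = (2 * i + r) ^ 2 - (2 * i + r + 3) / 2 + (r - 1) ^ 2 + 3 * h := by
      obtain ⟨k, rfl⟩ : ∃ k, h = k + 1 := ⟨h - 1, by omega⟩
      subst hh
      have a1 : (2 * i + 2 * (k + 1) + 3) / 2 = i + k + 2 := by omega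
      have a2 : 2 * (k + 1) - 1 = 2 * k + 1 := by omega
      rw [a1, a2]
      have a3 : i + k + 2 ≤ (2 * i + 2 * (k + 1)) ^ 2 := by nlinarith
      have a4 : (i + 2 * (k + 1)) ≤ 2 * i ^ 2 + 2 * (i + 2 * (k + 1)) ^ 2 := by nlinarith
      zify [a3, a4]
      ring
    rw [e1]
    exact key
  · have key := core i r ((2 * i + r) ^ 2 - (2 * i + r + 3) / 2 + (r - 1) ^ 2) (3 * h + 2) hr hc
      (X ^ r * ((1 - X ^ h) * (1 - X ^ (h + 1)) + X ^ h * (1 - X ^ 1))) (by subst hh; ring) (by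
        have n1 : NN ((1 - X ^ h) * (1 - X ^ (h + 1)) * (1 - X ^ r) * iQ (2 * (i + r))) := by
          rcases Nat.eq_zero_or_pos h with h0 | h0
          · subst h0; simpa using NN.zero
          · exact NN_cancel3 _ _ _ _ h0 (by omega) (by omega) (by omega) hr (by omega)
              (by omega) (by omega) (by omega)
        have n2 : NN ((1 - X ^ 1) * (1 - X ^ r) * (iQ (2 * i) * iQ (2 * (i + r)))) := by
          rcases Nat.eq_zero_or_pos i with hi | hi
          · have := (NN_cancel2 (2 * (i + r)) 1 r one_pos (by omega) hr (by omega)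
              (by omega)).mul (NN.iQ (2 * i))
            convert this using 1
            ring
          · have := (NN_cancel1 (2 * i) 1 one_pos (by omega)).mul
              (NN_cancel1 (2 * (i + r)) r hr (by omega))
            convert this using 1
            ring
        have := (NN.Xpow r).mul (((n1.mul (NN.iQ (2 * i)))).add ((NN.Xpow h).mul n2))
        convert this using 1
        ring)
    have e1 : 2 * i ^ 2 + 2 * (i + r) ^ 2 - (i + r)
        = (2 * i + r) ^ 2 - (2 * i + r + 3) / 2 + (r - 1) ^ 2 + (3 * h + 2) := by
      subst hh
      have a1 : (2 * i + (2 * h + 1) + 3) / 2 = i + h + 2 := by omega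
      have a2 : 2 * h + 1 - 1 = 2 * h := by omega
      rw [a1, a2]
      have a3 : i + h + 2 ≤ (2 * i + (2 * h + 1)) ^ 2 := by nlinarith
      have a4 : (i + (2 * h + 1)) ≤ 2 * i ^ 2 + 2 * (i + (2 * h + 1)) ^ 2 := by nlinarith
      zify [a3, a4]
      ring
    rw [e1]
    exact key

/-- the antidiagonal sum of the `T`s -/
noncomputable def TS (c : ℕ) : PowerSeries ℤ := ∑ i ∈ range ((c + 1) / 2), TT i (c - i)

lemma tele (c : ℕ) (hc : 3 ≤ c) (k : ℕ) (hk : 2 * k < c) :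
    NN (UU k (c - k) - 4 * ∑ i ∈ range (k + 1), TT i (c - i)) := by
  induction k with
  | zero =>
    have := TT_le_DD 0 c (by omega) (by omega)
    rw [← UU_zero c (by omega)] at this
    simpa using this
  | succ k ih =>
    have h1 := ih (by omega)
    obtain ⟨r, hr⟩ : ∃ r, c = k + 1 + (k + 1) + r := ⟨c - 2 * (k + 1), by omega⟩
    have h2 := TT_le_DD (k + 1) r (by omega) (by omega)
    rw [← UU_succ k r (by omega)] at h2
    rw [Finset.sum_range_succ]
    have e1 : c - (k + 1) = k + 1 + r := by omega
    have e2 : c - k = k + 1 + r + 1 := by omega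
    rw [e2] at h1
    rw [e1]
    convert h1.add h2 using 1
    ring

lemma TS_even (k : ℕ) (hk : 2 ≤ k) : NN (OO k - 4 * TS (2 * k)) := by
  have h := tele (2 * k) (by omega) (k - 1) (by omega)
  have e : k - 1 + 1 = (2 * k + 1) / 2 := by omega
  rw [e] at h
  have : UU (k - 1) (2 * k - (k - 1)) = OO k := by
    obtain ⟨m, rfl⟩ : ∃ m, k = m + 1 := ⟨k - 1, by omega⟩
    unfold UU OO
    have e1 : m + 1 - 1 = m := by omega
    have e2 : 2 * (m + 1) - (m + 1 - 1) = m + 2 := by omega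
    have e3 : m + (m + 2) - 1 = 2 * m + 1 := by omega
    have e4 : 2 * (m + 2) - 2 = 2 * (m + 1) := by omega
    have e5 : 2 * (m + 1) - 1 = 2 * m + 1 := by omega
    have e6 : (m + (m + 2)) ^ 2 - (m + (m + 2) + 3) / 2 + (m + 2 - m - 1) ^ 2
        = 4 * (m + 1) ^ 2 - (m + 1) := by
      have a1 : (m + (m + 2) + 3) / 2 = m + 2 := by omega
      have a2 : m + 2 - m - 1 = 1 := by omega
      rw [a1, a2]
      have a3 : m + 2 ≤ (m + (m + 2)) ^ 2 := by nlinarith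
      have a4 : m + 1 ≤ 4 * (m + 1) ^ 2 := by nlinarith
      zify [a3, a4]
      ring
    rw [e2, e1, e3, e4, e5, e6, iQ_succ (2 * m)]
    ring
  rw [this] at h
  exact h

/-- `G_{N+1}`, `N = 2k` -/
noncomputable def GG (k : ℕ) : PowerSeries ℤ :=
  X ^ (4 * k ^ 2 + 3 * k - 1) * (iQ (2 * k) * iQ (2 * k)) * g (2 * k)

lemma TS_odd (k : ℕ) (hk : 1 ≤ k) : NN (GG k - 4 * TS (2 * k + 1)) := by
  have h := tele (2 * k + 1) (by omega) k (by omega)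
  have e : k + 1 = (2 * k + 1 + 1) / 2 := by omega
  rw [e] at h
  have : UU k (2 * k + 1 - k) = GG k := by
    unfold UU GG
    have e2 : 2 * k + 1 - k = k + 1 := by omega
    have e3 : k + (k + 1) - 1 = 2 * k := by omega
    have e4 : 2 * (k + 1) - 2 = 2 * k := by omega
    have e6 : (k + (k + 1)) ^ 2 - (k + (k + 1) + 3) / 2 + (k + 1 - k - 1) ^ 2
        = 4 * k ^ 2 + 3 * k - 1 := by
      have a1 : (k + (k + 1) + 3) / 2 = k + 2 := by omega
      have a2 : k + 1 - k - 1 = 0 := by omega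
      rw [a1, a2]
      have a3 : k + 2 ≤ (k + (k + 1)) ^ 2 := by nlinarith
      have a4 : 1 ≤ 4 * k ^ 2 + 3 * k := by nlinarith
      zify [a3, a4]
      ring
    rw [e2, e3, e4, e6]
  rw [this] at h
  exact h

lemma NN_TT (i j : ℕ) (hij : i < j) : NN (TT i j) := by
  unfold TT
  have := ((NN_cancel1 (2 * j) (j - i) (by omega) (by omega)).mul (NN.iQ (2 * i))).mul
    (NN.Xpow (2 * i ^ 2 + 2 * j ^ 2 - j))
  convert this using 1
  ring

end DP

namespace DP
open PowerSeries

/-- evaluation of a coefficient list -/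
noncomputable def ev : List ℤ → PowerSeries ℤ → PowerSeries ℤ
  | [], _ => 0
  | a :: l, y => (a : PowerSeries ℤ) + y * ev l y

def ladd : List ℤ → List ℤ → List ℤ
  | [], m => m
  | a :: l, [] => a :: l
  | a :: l, b :: m => (a + b) :: ladd l m

def lsmul (c : ℤ) : List ℤ → List ℤ
  | [] => []
  | a :: l => (c * a) :: lsmul c l

def lshift : ℕ → List ℤ → List ℤ
  | 0, l => l
  | k + 1, l => 0 :: lshift k l

/-- multiply by `1 - y^e` -/
def lom (e : ℕ) (l : List ℤ) : List ℤ := ladd l (lshift e (lsmul (-1) l))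

/-- multiply by `1 + y^e + ... + y^(e(n-1))` -/
def lgeo (e : ℕ) : ℕ → List ℤ → List ℤ
  | 0, _ => []
  | n + 1, l => ladd l (lshift e (lgeo e n l))

def lnn : List ℤ → Bool
  | [] => true
  | a :: l => decide (0 ≤ a) && lnn l

def lext : List (ℕ × ℕ) → List ℤ → List ℤ
  | [], l => l
  | p :: es, l => lext es (lgeo p.1 p.2 l)

lemma ev_ladd (l m : List ℤ) (y : PowerSeries ℤ) : ev (ladd l m) y = ev l y + ev m y := by
  induction l generalizing m with
  | nil => simp [ladd, ev]
  | cons a l ih =>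
    cases m with
    | nil => simp [ladd, ev]
    | cons b m => simp only [ladd, ev, ih]; push_cast; ring

lemma ev_lsmul (c : ℤ) (l : List ℤ) (y : PowerSeries ℤ) : ev (lsmul c l) y = c * ev l y := by
  induction l with
  | nil => simp [lsmul, ev]
  | cons a l ih => simp only [lsmul, ev, ih]; push_cast; ring

lemma ev_lshift (k : ℕ) (l : List ℤ) (y : PowerSeries ℤ) : ev (lshift k l) y = y ^ k * ev l y := by
  induction k with
  | zero => simp [lshift]
  | succ k ih => simp only [lshift, ev, ih]; push_cast; ring

lemma ev_lom (e : ℕ) (l : List ℤ) (y : PowerSeries ℤ) : ev (lom e l) y = (1 - y ^ e) * ev l y := by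
  simp only [lom, ev_ladd, ev_lshift, ev_lsmul]; push_cast; ring

lemma ev_lgeo (e n : ℕ) (l : List ℤ) (y : PowerSeries ℤ) :
    ev (lgeo e n l) y = (∑ i ∈ range n, (y ^ e) ^ i) * ev l y := by
  induction n with
  | zero => simp [lgeo, ev]
  | succ n ih =>
    simp only [lgeo, ev_ladd, ev_lshift, ih]
    rw [Finset.sum_range_succ', Finset.sum_congr rfl (fun i _ => pow_succ (y ^ e) i),
      ← Finset.sum_mul]
    ring

lemma NN_ev (l : List ℤ) (h : lnn l = true) (y : PowerSeries ℤ) (hy : NN y) : NN (ev l y) := by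
  induction l with
  | nil => simpa [ev] using NN.zero
  | cons a l ih =>
    simp only [lnn, Bool.and_eq_true, decide_eq_true_eq] at h
    simp only [ev]
    refine NN.add ?_ (hy.mul (ih h.2))
    obtain ⟨k, rfl⟩ := Int.eq_ofNat_of_zero_le h.1
    simpa using NN.nat k

lemma geo_g (e n : ℕ) (he : 0 < e) (hn : 0 < n) :
    (∑ i ∈ range n, ((X : PowerSeries ℤ) ^ e) ^ i) * g (e * n) = g e := by
  have h1 := g_mul e he
  have h2 := g_mul (e * n) (by positivity)
  have h3 : (1 - (X : PowerSeries ℤ) ^ e) * (∑ i ∈ range n, ((X : PowerSeries ℤ) ^ e) ^ i)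
      = 1 - X ^ (e * n) := by rw [mul_neg_geom_sum, pow_mul]
  generalize (∑ i ∈ range n, ((X : PowerSeries ℤ) ^ e) ^ i) = S at *
  linear_combination (-(S * g (e * n))) * h1 + g e * h2 + g e * g (e * n) * h3

lemma ev_lext (M : ℕ) (hM : 0 < M) (es : List (ℕ × ℕ)) (l : List ℤ)
    (hes : ∀ p ∈ es, 0 < p.1 ∧ 0 < p.2) :
    ev l (X ^ M) * (es.map fun p => g (M * p.1)).prod
      = ev (lext es l) (X ^ M) * (es.map fun p => g (M * p.1 * p.2)).prod := by
  induction es generalizing l with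
  | nil => simp [lext]
  | cons p es ih =>
    have hp := hes p (by simp)
    have := ih (lgeo p.1 p.2 l) (fun q hq => hes q (by simp [hq]))
    simp only [lext, List.map_cons, List.prod_cons]
    have h2 := geo_g (M * p.1) p.2 (by have := hp.1; positivity) hp.2
    rw [ev_lgeo, ← pow_mul] at this
    rw [← h2]
    linear_combination (g (M * p.1 * p.2)) * this

lemma NN_cert (M : ℕ) (hM : 0 < M) (es : List (ℕ × ℕ)) (l : List ℤ)
    (hes : ∀ p ∈ es, 0 < p.1 ∧ 0 < p.2) (h : lnn (lext es l) = true) :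
    NN (ev l (X ^ M) * (es.map fun p => g (M * p.1)).prod) := by
  rw [ev_lext M hM es l hes]
  refine (NN_ev _ h _ (NN.Xpow M)).mul ?_
  clear h hes
  induction es with
  | nil => simpa using NN.one
  | cons p es ih => simp only [List.map_cons, List.prod_cons]; exact (NN.g _).mul ih

/-- the numerator in `y` -/
def PY : List ℤ :=
  ladd (lom 1 (lom 1 (lom 1 (lom 1 [100]))))
    (ladd (lom 1 (lom 1 [0, -5, -45])) [0, 0, 0, 0, 0, 32])

lemma cert_y : lnn (lext (List.replicate 11 (1, 11)) PY) = true := by decide +kernel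

/-- numerators for `N = 6, 8` -/
def PN (N : ℕ) : List ℤ :=
  ladd (lgeo 1 N (lom N (lom (N + 1) (lom (N + 1) (lom (N + 2) [0, 2])))))
    (ladd (lgeo 1 (N + 2) (lom (N + 1) (lom (N + 1) (lshift (2 * N) [-1]))))
      (lgeo 1 N (lshift (4 * N + 4) [1])))

lemma cert_6 : lnn (lext [(1, 40), (2, 20), (2, 20), (3, 13), (3, 13), (4, 10), (4, 10), (5, 8),
    (5, 8), (6, 7), (6, 7), (6, 7), (7, 6), (7, 6), (8, 5)] (PN 6)) = true := by decide +kernel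

end DP

namespace DP
open PowerSeries

lemma cert_8 : lnn (lext [(1, 40), (2, 20), (2, 20), (3, 13), (3, 13), (4, 10), (4, 10), (5, 8),
    (5, 8), (6, 7), (6, 7), (7, 6), (7, 6), (8, 5), (8, 5), (8, 5), (9, 4), (9, 4), (10, 4)]
    (PN 8)) = true := by decide +kernel

/-- bracket in `2 O_N + O_{N+2} - G_{N+1}` -/
noncomputable def BR (N : ℕ) : PowerSeries ℤ :=
  2 * X - X ^ (2 * N) * g N ^ 2 + X ^ (4 * N + 4) * (g N * g (N + 1) ^ 2 * g (N + 2))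

lemma GO_eq (k : ℕ) (hk : 1 ≤ k) :
    2 * OO k + OO (k + 1) - GG k
      = X ^ (4 * k ^ 2 - k - 1) * (iQ (2 * k - 1) * iQ (2 * k) * BR (2 * k)) := by
  obtain ⟨m, rfl⟩ : ∃ m, k = m + 1 := ⟨k - 1, by omega⟩
  unfold OO GG BR
  have e1 : 4 * (m + 1) ^ 2 - (m + 1) - 1 = 4 * m ^ 2 + 7 * m + 2 := by
    have : 4 * (m + 1) ^ 2 = 4 * m ^ 2 + 7 * m + 2 + 1 + (m + 1) := by ring
    omega
  have e2 : 4 * (m + 1) ^ 2 - (m + 1) = 4 * m ^ 2 + 7 * m + 3 := by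
    have : 4 * (m + 1) ^ 2 = 4 * m ^ 2 + 7 * m + 2 + 1 + (m + 1) := by ring
    omega
  have e3 : 4 * (m + 1 + 1) ^ 2 - (m + 1 + 1) = 4 * m ^ 2 + 15 * m + 14 := by
    have : 4 * (m + 1 + 1) ^ 2 = 4 * m ^ 2 + 15 * m + 14 + (m + 1 + 1) := by ring
    omega
  have e4 : 4 * (m + 1) ^ 2 + 3 * (m + 1) - 1 = 4 * m ^ 2 + 11 * m + 6 := by
    have : 4 * (m + 1) ^ 2 + 3 * (m + 1) = 4 * m ^ 2 + 11 * m + 6 + 1 := by ring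
    omega
  have e5 : 2 * (m + 1) - 1 = 2 * m + 1 := by omega
  have e6 : 2 * (m + 1 + 1) - 1 = 2 * m + 1 + 1 + 1 := by omega
  have e7 : 2 * (m + 1 + 1) = 2 * m + 1 + 1 + 1 + 1 := by omega
  have e8 : 2 * (m + 1) = 2 * m + 1 + 1 := by omega
  rw [e1, e2, e3, e4, e5, e6, e7, e8, iQ_succ (2 * m + 1 + 1 + 1), iQ_succ (2 * m + 1 + 1),
    iQ_succ (2 * m + 1)]
  have e9 : 2 * m + 1 + 1 + 2 = 2 * m + 1 + 1 + 1 + 1 := by omega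
  rw [e9]
  ring

lemma geo1_g (n : ℕ) (hn : 0 < n) :
    (∑ i ∈ range n, (X : PowerSeries ℤ) ^ i) * g n = g 1 := by
  simpa using geo_g 1 n one_pos hn

lemma BR_PN (N : ℕ) (hN : 0 < N) :
    g 1 * BR N = ev (PN N) X * (g N ^ 2 * g (N + 1) ^ 2 * g (N + 2)) := by
  have a1 := geo1_g N hN
  have a2 := geo1_g (N + 2) (by omega)
  have h0 := g_mul N hN
  have h1 := g_mul (N + 1) (by omega)
  have h2 := g_mul (N + 2) (by omega)
  have hP : ev (PN N) X = (∑ i ∈ range N, (X : PowerSeries ℤ) ^ i) *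
      ((1 - X ^ N) * ((1 - X ^ (N + 1)) * ((1 - X ^ (N + 1)) * ((1 - X ^ (N + 2)) * (2 * X)))))
      - (∑ i ∈ range (N + 2), (X : PowerSeries ℤ) ^ i) *
        ((1 - X ^ (N + 1)) * ((1 - X ^ (N + 1)) * X ^ (2 * N)))
      + (∑ i ∈ range N, (X : PowerSeries ℤ) ^ i) * X ^ (4 * N + 4) := by
    simp only [PN, ev_ladd, ev_lgeo, ev_lom, ev_lshift, ev, pow_one]
    push_cast
    ring
  rw [hP, BR]
  generalize (∑ i ∈ range N, (X : PowerSeries ℤ) ^ i) = S at *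
  generalize (∑ i ∈ range (N + 2), (X : PowerSeries ℤ) ^ i) = S2 at *
  have t1 : S * ((1 - X ^ N) * ((1 - X ^ (N + 1)) * ((1 - X ^ (N + 1)) * ((1 - X ^ (N + 2))
      * (2 * X))))) * (g N ^ 2 * g (N + 1) ^ 2 * g (N + 2)) = g 1 * (2 * X) := by
    have : S * ((1 - X ^ N) * ((1 - X ^ (N + 1)) * ((1 - X ^ (N + 1)) * ((1 - X ^ (N + 2))
      * (2 * X))))) * (g N ^ 2 * g (N + 1) ^ 2 * g (N + 2))
      = (S * g N) * ((1 - X ^ N) * g N) * ((1 - X ^ (N + 1)) * g (N + 1)) ^ 2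
        * ((1 - X ^ (N + 2)) * g (N + 2)) * (2 * X) := by ring
    rw [this, a1, h0, h1, h2]; ring
  have t2 : S2 * ((1 - X ^ (N + 1)) * ((1 - X ^ (N + 1)) * X ^ (2 * N)))
      * (g N ^ 2 * g (N + 1) ^ 2 * g (N + 2)) = g 1 * (X ^ (2 * N) * g N ^ 2) := by
    have : S2 * ((1 - X ^ (N + 1)) * ((1 - X ^ (N + 1)) * X ^ (2 * N)))
      * (g N ^ 2 * g (N + 1) ^ 2 * g (N + 2))
      = (S2 * g (N + 2)) * ((1 - X ^ (N + 1)) * g (N + 1)) ^ 2 * X ^ (2 * N) * g N ^ 2 := by ring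
    rw [this, a2, h1]; ring
  have t3 : S * X ^ (4 * N + 4) * (g N ^ 2 * g (N + 1) ^ 2 * g (N + 2))
      = g 1 * (X ^ (4 * N + 4) * (g N * g (N + 1) ^ 2 * g (N + 2))) := by
    have : S * X ^ (4 * N + 4) * (g N ^ 2 * g (N + 1) ^ 2 * g (N + 2))
      = (S * g N) * (X ^ (4 * N + 4) * (g N * g (N + 1) ^ 2 * g (N + 2))) := by ring
    rw [this, a1]
  linear_combination -t1 + t2 - t3

lemma NN_BR6 : NN (iQ 5 * iQ 6 * BR 6) := by
  have h := NN_cert 1 one_pos _ _ (by decide) cert_6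
  have e := BR_PN 6 (by norm_num)
  simp only [List.map_cons, List.map_nil, List.prod_cons, List.prod_nil, pow_one, one_mul,
    mul_one] at h
  have : iQ 5 * iQ 6 * BR 6 = (g 1 * BR 6) * (g 1 * g 2 ^ 2 * g 3 ^ 2 * g 4 ^ 2 * g 5 ^ 2 * g 6) := by
    simp only [iQ_succ, iQ_zero, Nat.reduceAdd]; ring
  rw [this, e]
  convert h using 1
  simp only [Nat.reduceAdd]
  ring

lemma NN_BR8 : NN (iQ 7 * iQ 8 * BR 8) := by
  have h := NN_cert 1 one_pos _ _ (by decide) cert_8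
  have e := BR_PN 8 (by norm_num)
  simp only [List.map_cons, List.map_nil, List.prod_cons, List.prod_nil, pow_one, one_mul,
    mul_one] at h
  have : iQ 7 * iQ 8 * BR 8 = (g 1 * BR 8) * (g 1 * g 2 ^ 2 * g 3 ^ 2 * g 4 ^ 2 * g 5 ^ 2
      * g 6 ^ 2 * g 7 ^ 2 * g 8) := by
    simp only [iQ_succ, iQ_zero, Nat.reduceAdd]; ring
  rw [this, e]
  convert h using 1
  simp only [Nat.reduceAdd]
  ring

/-- convexity -/
lemma NN_conv (M t : ℕ) (ht : t ≤ M) :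
    NN ((1 - ((t + 1 : ℕ) : PowerSeries ℤ) * X ^ M + (t : PowerSeries ℤ) * X ^ (M + 1)) * g 1 ^ 2) := by
  have h1 := g_mul 1 one_pos
  rw [pow_one] at h1
  have key : ∀ M : ℕ, (1 - ((M + 1 : ℕ) : PowerSeries ℤ) * X ^ M + (M : PowerSeries ℤ) * X ^ (M + 1))
      = (1 - X) ^ 2 * ∑ k ∈ range M, ((k + 1 : ℕ) : PowerSeries ℤ) * X ^ k := by
    intro M
    induction M with
    | zero => simp
    | succ M ih =>
      rw [Finset.sum_range_succ, mul_add, ← ih]; push_cast; ring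
  obtain ⟨d, rfl⟩ : ∃ d, M = t + d := ⟨M - t, by omega⟩
  have n1 : NN (∑ k ∈ range (t + d), ((k + 1 : ℕ) : PowerSeries ℤ) * X ^ k) :=
    NN.sum _ _ fun k _ => (NN.nat _).mul (NN.Xpow k)
  have n2 := n1.add (((NN.nat d).mul (NN.Xpow (t + d))).mul (NN.g 1))
  convert n2 using 1
  have k2 := key (t + d)
  generalize (∑ k ∈ range (t + d), ((k + 1 : ℕ) : PowerSeries ℤ) * X ^ k) = S at *
  push_cast at k2 ⊢
  linear_combination (g 1 ^ 2) * k2 + (S * (1 + (1 - X) * g 1) + d * X ^ (t + d) * g 1) * h1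

/-- extraction of `(1-X^N)^{-7}` -/
lemma NN_ext3 (k : ℕ) (hk : 5 ≤ k) : NN ((1 - X ^ (2 * k)) ^ 3 * iQ (2 * k - 1)) := by
  rw [iQ_split (2 * k - 1) {2, k, 3, 2 * k - 3} (by intro x; simp; omega),
    Finset.prod_insert (by simp; omega), Finset.prod_insert (by simp; omega),
    Finset.prod_pair (by omega)]
  have hR : NN (∏ i ∈ Finset.Icc 1 (2 * k - 1) \ {2, k, 3, 2 * k - 3}, g i) :=
    NN.prod _ _ fun i _ => NN.g i
  generalize (∏ i ∈ Finset.Icc 1 (2 * k - 1) \ {2, k, 3, 2 * k - 3}, g i) = R at *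
  obtain ⟨p, hp, hp2⟩ := geom_fac 2 k
  obtain ⟨q, hq, hq2⟩ := geom_fac k 2
  have g2 := g_mul 2 (by norm_num)
  have gk := g_mul k (by omega)
  have g3 := g_mul 3 (by norm_num)
  have g4 := g_mul (2 * k - 3) (by omega)
  have a1 : NN ((1 - X ^ (2 * k)) * g 2) := by
    convert hp using 1; rw [hp2]; linear_combination p * g2
  have a2 : NN ((1 - X ^ (2 * k)) * g k) := by
    convert hq using 1; rw [mul_comm 2 k, hq2]; linear_combination q * gk
  have a3 : NN ((1 - X ^ (2 * k)) * (g 3 * g (2 * k - 3))) := by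
    convert (NN.g (2 * k - 3)).add ((NN.Xpow 3).mul (NN.g 3)) using 1
    have : (X : PowerSeries ℤ) ^ (2 * k) = X ^ 3 * X ^ (2 * k - 3) := by
      rw [← pow_add]; congr 1; omega
    rw [this]
    linear_combination g (2 * k - 3) * g3 + X ^ 3 * g 3 * g4
  convert ((a1.mul a2).mul a3).mul hR using 1
  ring

/-- monotonicity in the exponent -/
lemma NN_mono (a b : ℕ) (hab : a ≤ b) : NN ((X ^ a - X ^ b) * g 1) := by
  obtain ⟨d, rfl⟩ : ∃ d, b = a + d := ⟨b - a, by omega⟩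
  obtain ⟨p, hp, hp2⟩ := geom_fac 1 d
  have h1 := g_mul 1 one_pos
  convert (NN.Xpow a).mul hp using 1
  rw [one_mul] at hp2
  linear_combination (X ^ a * g 1) * hp2 + X ^ a * p * h1

end DP

namespace DP
open PowerSeries

lemma iQ_g1 (n : ℕ) (hn : 1 ≤ n) : ∃ R, NN R ∧ iQ n = g 1 * R := by
  refine ⟨∏ i ∈ Finset.Icc 1 n \ {1}, g i, NN.prod _ _ fun i _ => NN.g i, ?_⟩
  rw [iQ_split n {1} (by intro x; simp; omega), Finset.prod_singleton]

lemma conv1 (u : ℕ) :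
    NN ((((u + 2 : ℕ) : PowerSeries ℤ) * g (u + 3) - ((u + 1 : ℕ) : PowerSeries ℤ) * g (u + 2))
      * g 1 ^ 2) := by
  have h := ((NN_conv (u + 2) (u + 1) (by omega)).mul (NN.g (u + 2))).mul (NN.g (u + 3))
  convert h using 1
  have h2 := g_mul (u + 2) (by omega)
  have h3 := g_mul (u + 3) (by omega)
  push_cast
  linear_combination (-((u : PowerSeries ℤ) + 2) * g (u + 3) * g 1 ^ 2) * h2
    + ((u : PowerSeries ℤ) + 1) * g (u + 2) * g 1 ^ 2 * h3

lemma conv2 (u : ℕ) :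
    NN ((((u + 2 : ℕ) : PowerSeries ℤ) * g (u + 4) - (u : PowerSeries ℤ) * g (u + 2))
      * g 1 ^ 2) := by
  have n1 := (NN.nat 2).mul (NN_conv (u + 2) (u + 1) (by omega))
  have n2 := (NN.Xpow (u + 2)).mul ((NN.nat u).add ((NN.nat 2).mul (NN.g 1)))
  have h := ((n1.add n2).mul (NN.g (u + 2))).mul (NN.g (u + 4))
  convert h using 1
  have h2 := g_mul (u + 2) (by omega)
  have h4 := g_mul (u + 4) (by omega)
  have h1 := g_mul 1 one_pos
  rw [pow_one] at h1
  push_cast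
  linear_combination (-((u : PowerSeries ℤ) + 2) * g (u + 4) * g 1 ^ 2) * h2
    + (u : PowerSeries ℤ) * g (u + 2) * g 1 ^ 2 * h4
    + (X ^ (u + 2) * g (u + 2) * g (u + 4)) * ((u : PowerSeries ℤ) * (1 + (1 - X) * g 1)
      + 2 * g 1) * h1

lemma conv3 (u : ℕ) (hu : 8 ≤ u) :
    NN ((25 * (g (u + 3) ^ 2 * g (u + 4)) - 16 * g (u + 2) ^ 3) * g 1 ^ 2) := by
  have c1 := conv1 u
  have c2 := conv2 u
  have n2 := (NN.nat (u + 2)).mul (NN.g (u + 3))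
  have n3 := (NN.nat (u + 2)).mul (NN.g (u + 4))
  have n1 := (NN.nat (u + 1)).mul (NN.g (u + 2))
  have t := (((c1.mul n2).mul n3).add ((c1.mul n1).mul n3)).add ((c2.mul n1).mul n1)
  obtain ⟨d, hd⟩ : ∃ d : ℕ, 25 * (u + 1) ^ 2 * u = 16 * (u + 2) ^ 3 + d := by
    apply Nat.exists_eq_add_of_le
    obtain ⟨v, rfl⟩ := Nat.exists_eq_add_of_le hu
    nlinarith [sq_nonneg v, pow_nonneg (Nat.zero_le v) 3]
  have t2 := ((NN.nat 25).mul t).add (((NN.nat d).mul ((NN.g (u + 2)).pow 3)).mul ((NN.g 1).pow 2))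
  refine NN.of_nat_mul (k := (u + 2) ^ 3) (by positivity) ?_
  convert t2 using 1
  have hd' : 25 * ((u : PowerSeries ℤ) + 1) ^ 2 * u = 16 * ((u : PowerSeries ℤ) + 2) ^ 3 + d := by
    have := congrArg (Nat.cast : ℕ → PowerSeries ℤ) hd
    push_cast at this
    exact this
  push_cast
  linear_combination (g (u + 2) ^ 3 * g 1 ^ 2) * hd'

lemma NN_PY (k : ℕ) (hk : 1 ≤ k) : NN (ev PY (X ^ k) * g k ^ 11) := by
  have h := NN_cert k (by omega) _ _ (by decide) cert_y
  simp only [List.map_replicate, List.prod_replicate, mul_one] at h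
  exact h

lemma ev_PY (y : PowerSeries ℤ) :
    ev PY y = 100 * (1 - y) ^ 4 - 5 * (y + 9 * y ^ 2) * (1 - y) ^ 2 + 32 * y ^ 5 := by
  simp only [PY, ev_ladd, ev_lom, ev]
  push_cast
  ring

lemma NN_BR_gen (k : ℕ) (hk : 5 ≤ k) : NN (iQ (2 * k - 1) * iQ (2 * k) * BR (2 * k)) := by
  obtain ⟨R1, hR1, e1⟩ := iQ_g1 (2 * k - 1) (by omega)
  obtain ⟨R2, hR2, e2⟩ := iQ_g1 (2 * k) (by omega)
  obtain ⟨u, hu⟩ : ∃ u, 2 * k = u + 2 := ⟨2 * k - 2, by omega⟩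
  have h7 : NN ((1 - X ^ (2 * k)) ^ 7 * (iQ (2 * k - 1) * iQ (2 * k))) := by
    have a := NN_ext3 k hk
    convert a.mul a using 1
    have e : iQ (2 * k) = iQ (2 * k - 1) * g (2 * k) := by
      have : 2 * k = 2 * k - 1 + 1 := by omega
      rw [this, iQ_succ]
      rfl
    rw [e]
    linear_combination ((1 - X ^ (2 * k)) ^ 6 * iQ (2 * k - 1) ^ 2) * g_mul (2 * k) (by omega)
  have hPY := NN_PY (2 * k) (by omega)
  have hg := g_mul (2 * k) (by omega)
  have hu8 : 8 ≤ u := by omega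
  have eM : 2 * k - 1 = u + 1 := by omega
  rw [eM] at e1 h7 ⊢
  rw [hu] at e2 h7 hPY hg ⊢
  have c3 := conv3 u (by omega)
  have cv := NN_conv (u + 1) 9 (by omega)
  have cm := NN_mono 4 (u + 3) (by omega)
  -- the four pieces
  have s1 := (((hR1.mul hR2).mul (NN.Xpow (4 * (u + 2) + 4))).mul (NN.g (u + 2))).mul
    ((NN.nat 2).mul c3)
  have s2 := (((hR1.mul hR2).mul (NN.Xpow (u + 2 + 1))).mul ((NN.g (u + 2)).pow 2)).mul
    ((NN.nat 5).mul cv)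
  have s3 := (((hR1.mul hR2).mul (NN.Xpow (4 * (u + 2)))).mul ((NN.g (u + 2)).pow 4)).mul
    (((NN.nat 32).mul cm).mul (NN.g 1))
  have s4 := (h7.mul hPY).mul NN.X1
  refine NN.of_nat_mul (k := 50) (by norm_num) ?_
  convert ((s1.add s2).add s3).add s4 using 1
  rw [ev_PY, BR, e1, e2]
  have e3 : u + 2 + 1 = u + 3 := by omega
  have e4 : u + 2 + 2 = u + 4 := by omega
  have e5 : u + 1 + 1 = u + 2 := by omega
  rw [e3, e4, e5]
  have f1 : (1 - (X : PowerSeries ℤ) ^ (u + 2)) ^ 7 * (g 1 * R1 * (g 1 * R2))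
      * ((100 * (1 - X ^ (u + 2)) ^ 4 - 5 * (X ^ (u + 2) + 9 * (X ^ (u + 2)) ^ 2)
        * (1 - X ^ (u + 2)) ^ 2 + 32 * (X ^ (u + 2)) ^ 5) * g (u + 2) ^ 11) * X
      = (g 1 * R1 * (g 1 * R2)) * X * (100 - 5 * (X ^ (u + 2) + 9 * (X ^ (u + 2)) ^ 2)
        * g (u + 2) ^ 2 + 32 * (X ^ (u + 2)) ^ 5 * g (u + 2) ^ 4) := by
    have : (1 - (X : PowerSeries ℤ) ^ (u + 2)) ^ 7 * (g 1 * R1 * (g 1 * R2))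
      * ((100 * (1 - X ^ (u + 2)) ^ 4 - 5 * (X ^ (u + 2) + 9 * (X ^ (u + 2)) ^ 2)
        * (1 - X ^ (u + 2)) ^ 2 + 32 * (X ^ (u + 2)) ^ 5) * g (u + 2) ^ 11) * X
      = (g 1 * R1 * (g 1 * R2)) * X * (100 * ((1 - X ^ (u + 2)) * g (u + 2)) ^ 11
        - 5 * (X ^ (u + 2) + 9 * (X ^ (u + 2)) ^ 2) * g (u + 2) ^ 2
          * ((1 - X ^ (u + 2)) * g (u + 2)) ^ 9
        + 32 * (X ^ (u + 2)) ^ 5 * g (u + 2) ^ 4 * ((1 - X ^ (u + 2)) * g (u + 2)) ^ 7) := by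
      generalize (X : PowerSeries ℤ) ^ (u + 2) = y
      generalize g (u + 2) = G
      ring
    rw [this, hg]
    ring
  rw [f1]
  push_cast
  generalize g (u + 2) = G
  generalize g (u + 3) = G3
  generalize g (u + 4) = G4
  ring

lemma GG_le (k : ℕ) (hk : 3 ≤ k) : NN (2 * OO k + OO (k + 1) - GG k) := by
  rw [GO_eq k (by omega)]
  refine (NN.Xpow _).mul ?_
  rcases (by omega : k = 3 ∨ k = 4 ∨ 5 ≤ k) with h | h | h
  · subst h; exact NN_BR6
  · subst h; exact NN_BR8
  · exact NN_BR_gen k h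

end DP

namespace DP
open PowerSeries

def PR : List ℤ :=
  ladd (lgeo 1 4 (lom 2 (lom 3 (lom 3 (lom 4 (lom 4 (lom 5 (lom 5 (lom 6 (lshift 3 [4])))))))))) <|
  ladd (lgeo 1 4 (lom 4 (lom 5 (lom 5 (lom 6 (lshift 14 [3])))))) <|
  ladd (lgeo 1 4 (lshift 33 [1])) <|
  ladd (lgeo 1 5 (lom 5 (lom 6 (lshift 21 [-1])))) <|
  ladd (lom 2 (lom 3 (lom 3 (lom 4 (lom 4 (lom 4 (lom 5 (lom 5 (lom 6 (lshift 3 [-4])))))))))) <|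
  ladd (lom 2 (lom 2 (lom 3 (lom 4 (lom 4 (lom 5 (lom 5 (lom 6 (lshift 6 [-4]))))))))) <|
  ladd (lom 3 (lom 4 (lom 4 (lom 5 (lom 5 (lom 6 (lshift 8 [-4]))))))) <|
  (lom 3 (lom 2 (lom 3 (lom 4 (lom 4 (lom 5 (lshift 15 [-4])))))))

lemma cert_R : lnn (lext [(1, 30), (2, 15), (2, 15), (3, 10), (3, 10), (4, 8), (4, 8), (4, 8),
    (5, 6), (5, 6), (6, 5)] PR) = true := by decide +kernel

noncomputable def EE : PowerSeries ℤ :=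
  4 * OO 1 + 3 * OO 2 + OO 3 - GG 2 - 4 * (X ^ 3 * (g 1 * g 2)) - 4 * TT 0 2 - 4 * TT 1 2
    - 4 * TT 0 3

lemma abs_R {R : Type*} [CommRing R] (a1 a2 a3 a4 a5 a6 g1 g2 g3 g4 g5 g6 S4 S5 : R)
    (x3 x14 x33 x21 x6 x8 x15 : R)
    (h1 : a1 * g1 = 1) (h2 : a2 * g2 = 1) (h3 : a3 * g3 = 1) (h4 : a4 * g4 = 1)
    (h5 : a5 * g5 = 1) (h6 : a6 * g6 = 1) (k4 : S4 * g4 = g1) (k5 : S5 * g5 = g1) :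
    4 * (x3 * (g1 * (g1 * g2))) + 3 * (x14 * (g1 * g2 * g3 * (g1 * g2 * g3 * g4)))
      + x33 * (g1 * g2 * g3 * g4 * g5 * (g1 * g2 * g3 * g4 * g5 * g6))
      - x21 * (g1 * g2 * g3 * g4 * (g1 * g2 * g3 * g4)) * g4 - 4 * (x3 * (g1 * g2))
      - 4 * (x6 * a2 * (1 * (g1 * g2 * g3 * g4))) - 4 * (x8 * a1 * (g1 * g2 * (g1 * g2 * g3 * g4)))
      - 4 * (x15 * a3 * (1 * (g1 * g2 * g3 * g4 * g5 * g6)))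
    = (S4 * (a2 * (a3 * (a3 * (a4 * (a4 * (a5 * (a5 * (a6 * (x3 * 4)))))))))
      + (S4 * (a4 * (a5 * (a5 * (a6 * (x14 * 3)))))
      + (S4 * (x33 * 1)
      + (S5 * (a5 * (a6 * (x21 * -1)))
      + (a2 * (a3 * (a3 * (a4 * (a4 * (a4 * (a5 * (a5 * (a6 * (x3 * -4)))))))))
      + (a2 * (a2 * (a3 * (a4 * (a4 * (a5 * (a5 * (a6 * (x6 * -4))))))))
      + (a3 * (a4 * (a4 * (a5 * (a5 * (a6 * (x8 * -4))))))
      + a3 * (a2 * (a3 * (a4 * (a4 * (a5 * (x15 * -4))))))))))))) *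
      (g1 * (g2 * (g2 * (g3 * (g3 * (g4 * (g4 * (g4 * (g5 * (g5 * g6)))))))))) := by
  have t1 : S4 * (a2 * (a3 * (a3 * (a4 * (a4 * (a5 * (a5 * (a6 * (x3 * 4)))))))))
      * (g1 * (g2 * (g2 * (g3 * (g3 * (g4 * (g4 * (g4 * (g5 * (g5 * g6))))))))))
      = 4 * x3 * (S4 * g4) * (a2 * g2) * (a3 * g3) ^ 2 * (a4 * g4) ^ 2 * (a5 * g5) ^ 2 * (a6 * g6)
        * g1 * g2 := by ring
  have t2 : S4 * (a4 * (a5 * (a5 * (a6 * (x14 * 3)))))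
      * (g1 * (g2 * (g2 * (g3 * (g3 * (g4 * (g4 * (g4 * (g5 * (g5 * g6))))))))))
      = 3 * x14 * (S4 * g4) * (a4 * g4) * (a5 * g5) ^ 2 * (a6 * g6)
        * g1 * g2 ^ 2 * g3 ^ 2 * g4 := by ring
  have t3 : S4 * (x33 * 1)
      * (g1 * (g2 * (g2 * (g3 * (g3 * (g4 * (g4 * (g4 * (g5 * (g5 * g6))))))))))
      = x33 * (S4 * g4) * g1 * g2 ^ 2 * g3 ^ 2 * g4 ^ 2 * g5 ^ 2 * g6 := by ring
  have t4 : S5 * (a5 * (a6 * (x21 * -1)))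
      * (g1 * (g2 * (g2 * (g3 * (g3 * (g4 * (g4 * (g4 * (g5 * (g5 * g6))))))))))
      = - x21 * (S5 * g5) * (a5 * g5) * (a6 * g6) * g1 * g2 ^ 2 * g3 ^ 2 * g4 ^ 3 := by ring
  have t5 : a2 * (a3 * (a3 * (a4 * (a4 * (a4 * (a5 * (a5 * (a6 * (x3 * -4)))))))))
      * (g1 * (g2 * (g2 * (g3 * (g3 * (g4 * (g4 * (g4 * (g5 * (g5 * g6))))))))))
      = - 4 * x3 * (a2 * g2) * (a3 * g3) ^ 2 * (a4 * g4) ^ 3 * (a5 * g5) ^ 2 * (a6 * g6)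
        * g1 * g2 := by ring
  have t6 : a2 * (a2 * (a3 * (a4 * (a4 * (a5 * (a5 * (a6 * (x6 * -4))))))))
      * (g1 * (g2 * (g2 * (g3 * (g3 * (g4 * (g4 * (g4 * (g5 * (g5 * g6))))))))))
      = - 4 * x6 * a2 * (a2 * g2) * (a3 * g3) * (a4 * g4) ^ 2 * (a5 * g5) ^ 2 * (a6 * g6)
        * g1 * g2 * g3 * g4 := by ring
  have t7 : a3 * (a4 * (a4 * (a5 * (a5 * (a6 * (x8 * -4))))))
      * (g1 * (g2 * (g2 * (g3 * (g3 * (g4 * (g4 * (g4 * (g5 * (g5 * g6))))))))))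
      = - 4 * x8 * (a3 * g3) * (a4 * g4) ^ 2 * (a5 * g5) ^ 2 * (a6 * g6)
        * g1 * g2 ^ 2 * g3 * g4 := by ring
  have t8 : a3 * (a2 * (a3 * (a4 * (a4 * (a5 * (x15 * -4))))))
      * (g1 * (g2 * (g2 * (g3 * (g3 * (g4 * (g4 * (g4 * (g5 * (g5 * g6))))))))))
      = - 4 * x15 * a3 * (a2 * g2) * (a3 * g3) * (a4 * g4) ^ 2 * (a5 * g5)
        * g1 * g2 * g3 * g4 * g5 * g6 := by ring
  simp only [add_mul, t1, t2, t3, t4, t5, t6, t7, t8]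
  rw [h2, h3, h4, h5, h6, k4, k5]
  linear_combination (-4 * x8 * g1 * g2 ^ 2 * g3 * g4) * h1

lemma NN_EE : NN EE := by
  have h := NN_cert 1 one_pos _ _ (by decide) cert_R
  convert h using 1
  simp only [EE, OO, TT, GG, List.map_cons, List.map_nil, List.prod_cons, List.prod_nil, one_mul,
    mul_one, pow_one]
  norm_num only
  simp only [iQ_succ 5, iQ_succ 4, iQ_succ 3, iQ_succ 2, iQ_succ 1, iQ_succ 0, iQ_zero, one_mul]
  norm_num only
  have := abs_R _ _ _ _ _ _ (g 1) (g 2) (g 3) (g 4) (g 5) (g 6) _ _ (X ^ 3) (X ^ 14) (X ^ 33)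
    (X ^ 21) (X ^ 6) (X ^ 8) (X ^ 15) (g_mul 1 (by norm_num)) (g_mul 2 (by norm_num))
    (g_mul 3 (by norm_num)) (g_mul 4 (by norm_num)) (g_mul 5 (by norm_num)) (g_mul 6 (by norm_num))
    (geo1_g 4 (by norm_num)) (geo1_g 5 (by norm_num))
  simp only [one_mul, pow_one] at this
  simp only [PR, ev_ladd, ev_lgeo, ev_lom, ev_lshift, ev, pow_one, mul_zero, add_zero]
  push_cast
  rw [← this]

end DP

namespace DP
open PowerSeries

noncomputable def RR : PowerSeries ℤ :=
  4 * OO 1 + 3 * OO 2 + OO 3 - GG 2 - 4 * (TT 0 1 + TT 0 2 + (TT 0 3 + TT 1 2))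

lemma TT01 : TT 0 1 = X * g 2 := by
  have h := g_mul 1 one_pos
  simp only [TT]
  norm_num only
  simp only [show iQ 2 = iQ 0 * g 1 * g 2 by rw [iQ_succ 1, iQ_succ 0], iQ_zero]
  linear_combination (X * g 2) * h

lemma RR_eq : RR + 4 * X = EE + 4 * (X ^ 4 * (g 1 * g 2)) := by
  have h1 := g_mul 1 one_pos
  have h2 := g_mul 2 two_pos
  rw [RR, TT01, EE]
  linear_combination 4 * X ^ 3 * g 2 * h1 - 4 * X * h2

lemma coeff_RR (m : ℕ) (hm : 4 ≤ m) : 1 ≤ coeff m RR := by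
  have h := congrArg (coeff m) RR_eq
  have hE := NN_EE m
  obtain ⟨t, rfl⟩ := Nat.exists_eq_add_of_le' hm
  have e : (g 1 * g 2 : PowerSeries ℤ) = g 1 + X ^ 2 * (g 1 * g 2) := by
    linear_combination (g 1) * g_mul 2 two_pos
  have n1 := ((NN.Xpow 2).mul ((NN.g 1).mul (NN.g 2))) t
  have c1 : coeff t (g 1) = 1 := by simp [g]
  have c2 : 1 ≤ coeff t (g 1 * g 2) := by
    rw [e, map_add, c1]; omega
  have e4 : (4 : PowerSeries ℤ) = C (4 : ℤ) := by simp
  rw [map_add, map_add, e4, coeff_C_mul, coeff_C_mul, mul_comm (X ^ 4), coeff_mul_X_pow,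
    coeff_X] at h
  rw [if_neg (by omega)] at h
  omega

noncomputable def bigD (J : ℕ) : PowerSeries ℤ :=
  4 * ∑ j ∈ range J, OO (j + 1) - 4 * ∑ c ∈ range (2 * J), TS c

lemma bigD_bound (d : ℕ) : NN (bigD (3 + d) - 3 * OO (3 + d) - RR) := by
  induction d with
  | zero =>
    have a := TS_even 2 le_rfl
    have b := TS_odd 2 (by norm_num)
    convert a.add b using 1
    simp only [bigD, RR]
    norm_num only
    simp only [Finset.sum_range_succ, Finset.sum_range_zero]
    have t0 : TS 0 = 0 := by simp [TS]
    have t1 : TS 1 = TT 0 1 := by simp [TS]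
    have t2 : TS 2 = TT 0 2 := by simp [TS]
    have t3 : TS 3 = TT 0 3 + TT 1 2 := by simp [TS, Finset.sum_range_succ]
    rw [t0, t1, t2, t3]
    ring
  | succ d ih =>
    have a := TS_even (3 + d) (by omega)
    have b := TS_odd (3 + d) (by omega)
    have c := GG_le (3 + d) (by omega)
    convert ((ih.add a).add b).add c using 1
    simp only [bigD]
    rw [show 2 * (3 + (d + 1)) = 2 * (3 + d) + 1 + 1 by ring, show 3 + (d + 1) = 3 + d + 1 by ring]
    simp only [Finset.sum_range_succ]
    ring

lemma double_sum (J : ℕ) :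
    NN (∑ c ∈ range (2 * J), TS c - ∑ j ∈ range (J + 1), ∑ i ∈ range j, TT i j) := by
  set A : Finset (Σ _ : ℕ, ℕ) := (range (2 * J)).sigma fun c => range ((c + 1) / 2) with hA
  set B : Finset (Σ _ : ℕ, ℕ) := (range (J + 1)).sigma fun j => range j with hB
  have e1 : ∑ c ∈ range (2 * J), TS c = ∑ x ∈ A, TT x.2 (x.1 - x.2) := by
    rw [hA, Finset.sum_sigma]; rfl
  have e2 : ∑ j ∈ range (J + 1), ∑ i ∈ range j, TT i j = ∑ x ∈ B, TT x.2 x.1 := by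
    rw [hB, Finset.sum_sigma]
  set f : (Σ _ : ℕ, ℕ) → (Σ _ : ℕ, ℕ) := fun x => ⟨x.1 + x.2, x.2⟩ with hf
  have e3 : ∑ x ∈ B, TT x.2 x.1 = ∑ x ∈ B.image f, TT x.2 (x.1 - x.2) := by
    rw [Finset.sum_image]
    · refine Finset.sum_congr rfl fun x _ => ?_
      simp [hf]
    · rintro ⟨a, b⟩ _ ⟨c, d⟩ _ h
      simp only [hf, Sigma.mk.injEq, heq_eq_eq] at h ⊢
      omega
  have hsub : B.image f ⊆ A := by
    intro y hy
    obtain ⟨⟨j, i⟩, hx, rfl⟩ := Finset.mem_image.1 hy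
    simp only [hB, hA, hf, Finset.mem_sigma, Finset.mem_range] at hx ⊢
    omega
  rw [e1, e2, e3, ← Finset.sum_sdiff hsub, add_sub_cancel_right]
  refine NN.sum _ _ fun x hx => NN_TT _ _ ?_
  have := (Finset.mem_sdiff.1 hx).1
  simp only [hA, Finset.mem_sigma, Finset.mem_range] at this
  omega

lemma main_pos (J m : ℕ) (hJ : 3 ≤ J) (hm : 4 ≤ m) :
    0 < coeff m (∑ j ∈ range J, OO (j + 1) - ∑ j ∈ range (J + 1), ∑ i ∈ range j, TT i j) := by
  obtain ⟨d, rfl⟩ := Nat.exists_eq_add_of_le hJ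
  have h1 := bigD_bound d m
  have h2 := double_sum (3 + d) m
  have h3 := coeff_RR m hm
  have h4 : 0 ≤ coeff m (OO (3 + d)) := ((NN.Xpow _).mul ((NN.iQ _).mul (NN.iQ _))) m
  have e4 : (4 : PowerSeries ℤ) = C (4 : ℤ) := by simp
  have e3 : (3 : PowerSeries ℤ) = C (3 : ℤ) := by simp
  rw [bigD, e4, e3] at h1
  simp only [map_sub, coeff_C_mul] at h1 h2 ⊢
  omega

end DP

namespace DP
open PowerSeries

noncomputable def pp (a M : ℕ) : PowerSeries ℤ := ∑ S ∈ powersetCard a (range M), X ^ (∑ x ∈ S, x)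

lemma pp_zero (M : ℕ) : pp 0 M = 1 := by simp [pp]

lemma pp_succ_zero (a : ℕ) : pp (a + 1) 0 = 0 := by
  rw [pp, Finset.powersetCard_eq_empty.2 (by simp), Finset.sum_empty]

lemma pp_rec (a M : ℕ) : pp (a + 1) (M + 1) = pp (a + 1) M + X ^ M * pp a M := by
  have hM : M ∉ range M := by simp
  rw [pp, Finset.range_add_one, Finset.powersetCard_succ_insert hM, Finset.sum_union, Finset.sum_image]
  · rw [pp, pp, Finset.mul_sum]
    congr 1
    refine Finset.sum_congr rfl fun S hS => ?_
    have : M ∉ S := fun h => hM ((Finset.mem_powersetCard.1 hS).1 h)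
    rw [Finset.sum_insert this, pow_add]
  · intro S hS T hT h
    have h1 : M ∉ S := fun h => hM ((Finset.mem_powersetCard.1 hS).1 h)
    have h2 : M ∉ T := fun h => hM ((Finset.mem_powersetCard.1 hT).1 h)
    rw [← Finset.erase_insert h1, ← Finset.erase_insert h2]
    exact congrArg (fun U => Finset.erase U M) h
  · rw [Finset.disjoint_left]
    intro S hS hS2
    obtain ⟨T, _, rfl⟩ := Finset.mem_image.1 hS2
    exact hM ((Finset.mem_powersetCard.1 hS).1 (Finset.mem_insert_self _ _))

noncomputable def FF (a M : ℕ) : PowerSeries ℤ := ∏ i ∈ range a, (1 - X ^ (M - i))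

lemma FF_zero_of_lt (a M : ℕ) (h : M < a) : FF a M = 0 :=
  Finset.prod_eq_zero (i := M) (by simpa using h) (by simp)

lemma FF_shift (a M : ℕ) : FF (a + 1) (M + 1) = (1 - X ^ (M + 1)) * FF a M := by
  simp only [FF, Finset.prod_range_succ']
  rw [mul_comm]
  congr 1
  refine Finset.prod_congr rfl fun i _ => ?_
  rw [Nat.add_sub_add_right]

lemma pp_closed (M a : ℕ) : pp a M = X ^ (a.choose 2) * FF a M * iQ a := by
  induction M generalizing a with
  | zero =>
    cases a with
    | zero => simp [pp_zero, FF, iQ_zero]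
    | succ a => rw [pp_succ_zero, FF_zero_of_lt _ _ (by omega)]; ring
  | succ M ih =>
    cases a with
    | zero => simp [pp_zero, FF, iQ_zero]
    | succ a =>
      rw [pp_rec, ih, ih, FF_shift, iQ_succ' a]
      have hc : (a + 1).choose 2 = a + a.choose 2 := by
        rw [Nat.choose_succ_succ' a 1, Nat.choose_one_right]
      rw [hc]
      have hs : FF (a + 1) M = FF a M * (1 - X ^ (M - a)) := by rw [FF, Finset.prod_range_succ]; rfl
      rw [hs]
      by_cases h : a ≤ M
      · obtain ⟨t, rfl⟩ := Nat.exists_eq_add_of_le h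
        rw [Nat.add_sub_cancel_left]
        ring
      · rw [FF_zero_of_lt a M (by omega)]; ring

lemma FF_mod (a M : ℕ) (h : a ≤ M) : ∃ W, FF a M = 1 + X ^ (M + 1 - a) * W := by
  induction a with
  | zero => exact ⟨0, by simp [FF]⟩
  | succ a ih =>
    obtain ⟨W, hW⟩ := ih (by omega)
    obtain ⟨t, rfl⟩ := Nat.exists_eq_add_of_le h
    have e1 : a + 1 + t + 1 - a = t + 2 := by omega
    have e2 : a + 1 + t + 1 - (a + 1) = t + 1 := by omega
    have e3 : a + 1 + t - a = t + 1 := by omega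
    have hs : FF (a + 1) (a + 1 + t) = FF a (a + 1 + t) * (1 - X ^ (a + 1 + t - a)) := by
      rw [FF, Finset.prod_range_succ]; rfl
    rw [hs, hW, e1, e2, e3]
    exact ⟨X * W - 1 - X ^ (t + 2) * W, by ring⟩

lemma pp_mod (a M : ℕ) (h : a ≤ M) : ∃ W, pp a M = X ^ (a.choose 2) * iQ a + X ^ M * W := by
  obtain ⟨W, hW⟩ := FF_mod a M h
  have hc : a ≤ a.choose 2 + 1 := by
    cases a with
    | zero => omega
    | succ a =>
      have hc : (a + 1).choose 2 = a + a.choose 2 := by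
        rw [Nat.choose_succ_succ' a 1, Nat.choose_one_right]
      omega
  obtain ⟨s, hs⟩ := Nat.exists_eq_add_of_le (show M ≤ a.choose 2 + (M + 1 - a) by omega)
  refine ⟨X ^ s * W * iQ a, ?_⟩
  rw [pp_closed, hW]
  have : (X : PowerSeries ℤ) ^ (a.choose 2) * X ^ (M + 1 - a) = X ^ M * X ^ s := by
    rw [← pow_add, ← pow_add, hs]
  linear_combination W * iQ a * this

lemma coeff_ee (J j b m : ℕ) (hj : j ≤ J) (hb : b ≤ 2 * J) (hm : m < 2 * J) :
    coeff m (X ^ (j + b) * (pp (2 * j) (2 * J) * pp b (2 * J))) = coeff m (ee j b) := by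
  obtain ⟨W1, h1⟩ := pp_mod (2 * j) (2 * J) (by omega)
  obtain ⟨W2, h2⟩ := pp_mod b (2 * J) hb
  rw [h1, h2]
  have e1 : (2 * j).choose 2 + j = 2 * j ^ 2 := by
    rw [Nat.choose_two_right]
    cases j with
    | zero => rfl
    | succ j =>
      have : 2 * (j + 1) * (2 * (j + 1) - 1) = 2 * ((j + 1) * (2 * j + 1)) := by
        rw [show 2 * (j + 1) - 1 = 2 * j + 1 by omega]; ring
      rw [this, Nat.mul_div_cancel_left _ two_pos]; ring
  have e2 : b.choose 2 + b = b * (b + 1) / 2 := by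
    have : (b + 1).choose 2 = b + b.choose 2 := by
      rw [Nat.choose_succ_succ' b 1, Nat.choose_one_right]
    rw [Nat.choose_two_right (b + 1), Nat.add_sub_cancel, mul_comm] at this
    omega
  have : X ^ (j + b) * ((X ^ ((2 * j).choose 2) * iQ (2 * j) + X ^ (2 * J) * W1)
      * (X ^ (b.choose 2) * iQ b + X ^ (2 * J) * W2))
      = ee j b + X ^ (2 * J) * (X ^ (j + b) * (X ^ ((2 * j).choose 2) * iQ (2 * j) * W2
        + W1 * (X ^ (b.choose 2) * iQ b + X ^ (2 * J) * W2))) := by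
    rw [ee, ← e1, ← e2]
    ring
  rw [this, map_add, coeff_X_pow_mul', if_neg (by omega), add_zero]

lemma coeff_count (J j b m : ℕ) :
    coeff m (X ^ (j + b) * (pp (2 * j) (2 * J) * pp b (2 * J)))
      = ∑ A ∈ powersetCard (2 * j) (range (2 * J)), ∑ B ∈ powersetCard b (range (2 * J)),
        if 2 * (∑ x ∈ A, x) + 2 * j + 2 * (∑ x ∈ B, x) + 2 * b = 2 * m then (1 : ℤ) else 0 := by
  rw [pp, pp, Finset.sum_mul_sum, Finset.mul_sum, map_sum]
  refine Finset.sum_congr rfl fun A _ => ?_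
  rw [Finset.mul_sum, map_sum]
  refine Finset.sum_congr rfl fun B _ => ?_
  rw [← pow_add, ← pow_add, coeff_X_pow]
  congr 1
  exact propext ⟨fun h => by omega, fun h => by omega⟩

lemma sum_even_odd (F : ℕ → ℤ) (J : ℕ) :
    ∑ a ∈ range (2 * J + 1), F a = ∑ j ∈ range (J + 1), F (2 * j) + ∑ j ∈ range J, F (2 * j + 1) := by
  induction J with
  | zero => simp
  | succ J ih =>
    rw [show 2 * (J + 1) + 1 = 2 * J + 1 + 1 + 1 by ring, Finset.sum_range_succ,
      Finset.sum_range_succ, ih, Finset.sum_range_succ _ (J + 1),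
      Finset.sum_range_succ (fun j => F (2 * j + 1)) J]
    rw [show 2 * (J + 1) = 2 * J + 1 + 1 by ring]
    ring

def sg (a b : ℕ) : ℤ := (if b < a then 1 else 0) - (if a < b then 1 else 0)

def ww (p : Finset ℕ × Finset ℕ) : ℕ :=
  2 * (∑ x ∈ p.1, x) + p.1.card + 2 * (∑ x ∈ p.2, x) + 2 * p.2.card

def box (M : ℕ) : Finset (Finset ℕ × Finset ℕ) := (range M).powerset ×ˢ (range M).powerset

lemma signed_sum (J m : ℕ) (hm : m < 2 * J) :
    ∑ p ∈ box (2 * J), (if ww p = 2 * m then sg p.1.card p.2.card else 0)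
      = coeff m (∑ j ∈ range J, OO (j + 1) - ∑ j ∈ range (J + 1), ∑ i ∈ range j, TT i j) := by
  rw [← box_identity, box, Finset.sum_product, Finset.sum_powerset, Finset.card_range]
  have h1 : ∀ a ∈ range (2 * J + 1), ∑ A ∈ powersetCard a (range (2 * J)),
      ∑ B ∈ (range (2 * J)).powerset,
        (if ww (A, B) = 2 * m then sg A.card B.card else 0)
      = ∑ b ∈ range (2 * J + 1), sg a b * ∑ A ∈ powersetCard a (range (2 * J)),
        ∑ B ∈ powersetCard b (range (2 * J)),
        if 2 * (∑ x ∈ A, x) + a + 2 * (∑ x ∈ B, x) + 2 * b = 2 * m then (1 : ℤ) else 0 := by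
    intro a _
    simp only [Finset.mul_sum]
    symm
    rw [Finset.sum_comm]
    symm
    refine Finset.sum_congr rfl fun A hA => ?_
    rw [Finset.sum_powerset, Finset.card_range]
    refine Finset.sum_congr rfl fun b _ => ?_
    refine Finset.sum_congr rfl fun B hB => ?_
    rw [ww, (Finset.mem_powersetCard.1 hA).2, (Finset.mem_powersetCard.1 hB).2]
    simp [Finset.mul_sum]
  rw [Finset.sum_congr rfl h1, sum_even_odd]
  have h2 : ∀ j ∈ range J, ∑ b ∈ range (2 * J + 1), sg (2 * j + 1) b *
      ∑ A ∈ powersetCard (2 * j + 1) (range (2 * J)), ∑ B ∈ powersetCard b (range (2 * J)),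
        (if 2 * (∑ x ∈ A, x) + (2 * j + 1) + 2 * (∑ x ∈ B, x) + 2 * b = 2 * m then (1 : ℤ) else 0)
      = 0 := by
    intro j _
    refine Finset.sum_eq_zero fun b _ => ?_
    rw [Finset.sum_eq_zero, mul_zero]
    intro A _
    refine Finset.sum_eq_zero fun B _ => ?_
    rw [if_neg (by omega)]
  rw [Finset.sum_eq_zero h2, add_zero, map_sum]
  refine Finset.sum_congr rfl fun j hj => ?_
  rw [map_sum]
  refine Finset.sum_congr rfl fun b hb => ?_
  rw [Finset.mem_range] at hj hb
  rw [← coeff_count, coeff_ee J j b m (by omega) (by omega) hm]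
  have : ((if b < 2 * j then (1 : PowerSeries ℤ) else 0) - (if 2 * j < b then 1 else 0))
      = C (sg (2 * j) b) := by
    unfold sg
    split_ifs <;> simp
  rw [this, coeff_C_mul]

end DP


namespace DP
open PowerSeries

def mk2 (A B : Finset ℕ) : Multiset ℕ := A.val.map (fun x => 2 * x + 1) + B.val.map (fun x => 2 * x + 2)

lemma mem_mk2 (A B : Finset ℕ) (p : ℕ) :
    p ∈ mk2 A B ↔ (∃ x ∈ A, 2 * x + 1 = p) ∨ (∃ x ∈ B, 2 * x + 2 = p) := by
  simp [mk2]

lemma nodup_mk2 (A B : Finset ℕ) : (mk2 A B).Nodup := by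
  rw [mk2, Multiset.nodup_add]
  refine ⟨A.nodup.map fun x y h => by simpa using h, B.nodup.map fun x y h => by simpa using h, ?_⟩
  rw [Multiset.disjoint_left]
  intro p h1 h2
  simp only [Multiset.mem_map] at h1 h2
  obtain ⟨x, _, rfl⟩ := h1
  obtain ⟨y, _, h⟩ := h2
  omega

lemma sum_mk2 (A B : Finset ℕ) : (mk2 A B).sum = ww (A, B) := by
  rw [mk2, Multiset.sum_add]
  change ∑ x ∈ A, (2 * x + 1) + ∑ x ∈ B, (2 * x + 2) = _
  rw [Finset.sum_add_distrib, Finset.sum_add_distrib, ← Finset.mul_sum, ← Finset.mul_sum, ww]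
  simp
  ring

lemma odd_mk2 (A B : Finset ℕ) : ((mk2 A B).filter (fun p => p % 2 = 1)).card = A.card := by
  rw [mk2, Multiset.filter_add, Multiset.filter_eq_self.2, Multiset.filter_eq_nil.2]
  · simp
  · intro a h; simp only [Multiset.mem_map] at h; obtain ⟨x, _, rfl⟩ := h; omega
  · intro a h; simp only [Multiset.mem_map] at h; obtain ⟨x, _, rfl⟩ := h; omega

lemma even_mk2 (A B : Finset ℕ) : ((mk2 A B).filter (fun p => p % 2 = 0)).card = B.card := by
  rw [mk2, Multiset.filter_add, Multiset.filter_eq_nil.2, Multiset.filter_eq_self.2]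
  · simp
  · intro a h; simp only [Multiset.mem_map] at h; obtain ⟨x, _, rfl⟩ := h; omega
  · intro a h; simp only [Multiset.mem_map] at h; obtain ⟨x, _, rfl⟩ := h; omega

def pA (M : ℕ) (s : Multiset ℕ) : Finset ℕ := (range M).filter fun x => 2 * x + 1 ∈ s
def pB (M : ℕ) (s : Multiset ℕ) : Finset ℕ := (range M).filter fun x => 2 * x + 2 ∈ s

lemma mk2_parts (n M : ℕ) (hn : n ≤ 2 * M) (l : n.Partition) (hl : l.parts.Nodup) :
    mk2 (pA M l.parts) (pB M l.parts) = l.parts := by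
  rw [Multiset.Nodup.ext (nodup_mk2 _ _) hl]
  intro p
  rw [mem_mk2]
  simp only [pA, pB, Finset.mem_filter, Finset.mem_range]
  constructor
  · rintro (⟨x, ⟨_, h⟩, rfl⟩ | ⟨x, ⟨_, h⟩, rfl⟩) <;> exact h
  · intro h
    have h1 := l.parts_pos h
    have h2 := Nat.Partition.le_of_mem_parts h
    rcases Nat.even_or_odd p with ⟨k, hk⟩ | ⟨k, hk⟩
    · right
      refine ⟨k - 1, ⟨by omega, ?_⟩, by omega⟩
      rwa [show 2 * (k - 1) + 2 = p by omega]
    · left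
      refine ⟨k, ⟨by omega, ?_⟩, by omega⟩
      rwa [← hk]

lemma card_eq (n M : ℕ) (hn : n ≤ 2 * M) (P : ℕ → ℕ → Prop) [DecidableRel P] :
    Nat.card {l : n.Partition // l.parts.Nodup ∧ P l.oddCount l.evenCount}
      = ((box M).filter fun p => ww p = n ∧ P p.1.card p.2.card).card := by
  rw [Nat.card_eq_fintype_card, Fintype.card_subtype]
  refine Finset.card_bij (fun l _ => (pA M l.parts, pB M l.parts)) ?_ ?_ ?_
  · intro l hl
    obtain ⟨h1, h2⟩ := (Finset.mem_filter.1 hl).2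
    have e := mk2_parts n M hn l h1
    have c1 := odd_mk2 (pA M l.parts) (pB M l.parts)
    have c2 := even_mk2 (pA M l.parts) (pB M l.parts)
    have c3 := sum_mk2 (pA M l.parts) (pB M l.parts)
    rw [e] at c1 c2 c3
    rw [Finset.mem_filter]
    refine ⟨?_, ?_, ?_⟩
    · simp [box, pA, pB, Finset.filter_subset]
    · rw [← c3, l.parts_sum]
    · rw [← c1, ← c2]; exact h2
  · intro l hl l' hl' h
    have h1 := (Finset.mem_filter.1 hl).2.1
    have h2 := (Finset.mem_filter.1 hl').2.1
    rw [Prod.mk.injEq] at h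
    apply Nat.Partition.ext
    rw [← mk2_parts n M hn l h1, ← mk2_parts n M hn l' h2, h.1, h.2]
  · rintro ⟨A, B⟩ h
    obtain ⟨h1, h2, h3⟩ := Finset.mem_filter.1 h
    simp only [box, Finset.mem_product, Finset.mem_powerset] at h1
    refine ⟨⟨mk2 A B, ?_, ?_⟩, ?_, ?_⟩
    · intro i hi
      rw [mem_mk2] at hi
      rcases hi with ⟨x, _, rfl⟩ | ⟨x, _, rfl⟩ <;> omega
    · rw [sum_mk2, h2]
    · rw [Finset.mem_filter]
      refine ⟨Finset.mem_univ _, nodup_mk2 A B, ?_⟩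
      simp only [Nat.Partition.oddCount, Nat.Partition.evenCount, odd_mk2, even_mk2]
      exact h3
    · ext x
      · simp only [pA, Finset.mem_filter, Finset.mem_range, mem_mk2]
        constructor
        · rintro ⟨_, ⟨y, hy, e⟩ | ⟨y, hy, e⟩⟩
          · rwa [show x = y by omega]
          · omega
        · intro hx
          exact ⟨Finset.mem_range.1 (h1.1 hx), Or.inl ⟨x, hx, rfl⟩⟩
      · simp only [pB, Finset.mem_filter, Finset.mem_range, mem_mk2]
        constructor
        · rintro ⟨_, ⟨y, hy, e⟩ | ⟨y, hy, e⟩⟩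
          · omega
          · rwa [show x = y by omega]
        · intro hx
          exact ⟨Finset.mem_range.1 (h1.2 hx), Or.inr ⟨x, hx, rfl⟩⟩

end DP

/-- For every even integer `n > 6`, among partitions of `n` into distinct parts, those with
more odd parts than even parts outnumber those with more even parts than odd parts. -/
theorem do_gt_de_even (n : ℕ) (hn : 6 < n) (hev : Even n) :
    Nat.card {l : n.Partition // l.parts.Nodup ∧ l.evenCount < l.oddCount} >
      Nat.card {l : n.Partition // l.parts.Nodup ∧ l.oddCount < l.evenCount} := by
  obtain ⟨m, hm⟩ := hev
  have hm2 : n = 2 * m := by omega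
  have k1 := DP.card_eq n (2 * (m + 3)) (by omega) (fun a b => b < a)
  have k2 := DP.card_eq n (2 * (m + 3)) (by omega) (fun a b => a < b)
  have h1 := DP.signed_sum (m + 3) m (by omega)
  have h2 := DP.main_pos (m + 3) m (by omega) (by omega)
  rw [← h1] at h2
  rw [k1, k2, gt_iff_lt, ← Int.ofNat_lt, Finset.card_filter, Finset.card_filter, ← sub_pos]
  push_cast
  rw [← Finset.sum_sub_distrib]
  refine lt_of_lt_of_eq h2 (Finset.sum_congr rfl fun p _ => ?_)
  rw [hm2]
  unfold DP.sg
  split_ifs <;> simp_all
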